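/- arXiv:math/0508339 — 2 statements merged into one kernel-verified Lean document; each statement's English description precedes it below -/
import Mathlib

section
/- Let d ≥ 1. There exists a constant C depending only on d such that for every n ≥ 2 and every β ∈ I_n^d, | 1/(π²|β|²) + 1/λ_β | ≤ C/(|β| n), where λ_β = −π² (β_1² c_{β_1} + ⋯ + β_d² c_{β_d}) and c_l = sin²(lπ/2n)/(lπ/2n)². -/
open Real

lemma cbound (x : ℝ) (h0 : 0 < x) (h1 : x < π / 2) :
    4 / π ^ 2 ≤ sin x ^ 2 / x ^ 2 ∧ 1 - x ≤ sin x ^ 2 / x ^ 2 ∧ sin x ^ 2 / x ^ 2 ≤ 1 := by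
  have hpi := Real.pi_pos
  have hx2 : 0 < x ^ 2 := by positivity
  have hs := Real.sin_lt h0
  have hs0 : 0 < sin x := Real.sin_pos_of_pos_of_lt_pi h0 (by linarith)
  have hs1 := Real.sin_le_one x
  have hj := Real.mul_le_sin h0.le h1.le
  have hc : 0 < cos x := Real.cos_pos_of_mem_Ioo ⟨by linarith, h1⟩
  have ht : x * cos x ≤ sin x := by
    have := Real.lt_tan h0 h1
    rw [Real.tan_eq_sin_div_cos, lt_div_iff₀ hc] at this
    exact this.le
  refine ⟨?_, ?_, ?_⟩
  · rw [le_div_iff₀ hx2]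
    calc 4 / π ^ 2 * x ^ 2 = (2 / π * x) ^ 2 := by ring
      _ ≤ _ := by gcongr
  · have h2 : (1 - x) ≤ cos x ^ 2 := by
      rw [Real.cos_sq']
      nlinarith
    rw [le_div_iff₀ hx2]
    calc (1 - x) * x ^ 2 ≤ cos x ^ 2 * x ^ 2 := by gcongr
      _ = (x * cos x) ^ 2 := by ring
      _ ≤ _ := by gcongr
  · rw [div_le_one hx2]
    gcongr

/-- Estimate (bound7) of Lemma 3.13: there is `C = C(d)` such that for all `n ≥ 2` and
`β ∈ I_n^d`, `|1/(π²|β|²) + 1/λ_β| ≤ C/(|β| n)`, where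
`λ_β = -π²(β₁²c_{β₁} + ⋯ + β_d²c_{β_d})` and `c_l = sin²(lπ/2n)/(lπ/2n)²`. -/
theorem stmt16 (d : ℕ) (hd : 1 ≤ d) :
    ∃ C : ℝ, ∀ n : ℕ, 2 ≤ n → ∀ β : Fin d → ℕ, (∀ k, 1 ≤ β k ∧ β k ≤ n - 1) →
      |1 / (Real.pi ^ 2 * ∑ k, (β k : ℝ) ^ 2) +
          1 / (-Real.pi ^ 2 * ∑ k, (β k : ℝ) ^ 2 *
            (Real.sin ((β k : ℝ) * Real.pi / (2 * (n : ℝ))) ^ 2 /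
              ((β k : ℝ) * Real.pi / (2 * (n : ℝ))) ^ 2))| ≤
        C / (Real.sqrt (∑ k, (β k : ℝ) ^ 2) * (n : ℝ)) := by
  have hpi := Real.pi_pos
  refine ⟨π / 8, fun n hn β hβ => ?_⟩
  have hn0 : (0 : ℝ) < n := by
    have : 0 < n := by omega
    exact_mod_cast this
  have hb : ∀ k, (0 : ℝ) < β k := fun k => by
    have := (hβ k).1
    exact_mod_cast this
  have hbn : ∀ k, (β k : ℝ) < n := fun k => by
    have h := hβ k
    have : β k < n := by omega
    exact_mod_cast this
  have key : ∀ k, _ := fun k => cbound ((β k : ℝ) * π / (2 * (n : ℝ)))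
    (by have := hb k; positivity)
    (by
      rw [div_lt_div_iff₀ (by positivity) (by norm_num)]
      nlinarith [mul_lt_mul_of_pos_right (hbn k) hpi])
  set c : Fin d → ℝ := fun k => sin ((β k : ℝ) * π / (2 * (n : ℝ))) ^ 2 /
              ((β k : ℝ) * π / (2 * (n : ℝ))) ^ 2 with hc
  change |1 / (π ^ 2 * ∑ k, (β k : ℝ) ^ 2) + 1 / (-π ^ 2 * ∑ k, (β k : ℝ) ^ 2 * c k)| ≤ _
  change ∀ k, 4 / π ^ 2 ≤ c k ∧ 1 - (β k : ℝ) * π / (2 * (n : ℝ)) ≤ c k ∧ c k ≤ 1 at key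
  clear_value c
  set S : ℝ := ∑ k, (β k : ℝ) ^ 2 with hS
  set T : ℝ := ∑ k, (β k : ℝ) ^ 2 * c k with hT
  have hSpos : 0 < S :=
    Finset.sum_pos (fun k _ => by have := hb k; positivity) ⟨⟨0, hd⟩, Finset.mem_univ _⟩
  have hle : ∀ k, (β k : ℝ) ≤ √S := fun k => by
    apply Real.le_sqrt_of_sq_le
    exact Finset.single_le_sum (f := fun k => (β k : ℝ) ^ 2)
      (fun i _ => by positivity) (Finset.mem_univ k)
  have hTS : T ≤ S := Finset.sum_le_sum fun k _ =>
    mul_le_of_le_one_right (by positivity) (key k).2.2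
  have hT1 : S * (4 / π ^ 2) ≤ T := by
    rw [hS, Finset.sum_mul]
    exact Finset.sum_le_sum fun k _ => mul_le_mul_of_nonneg_left (key k).1 (by positivity)
  have hT2 : S * (1 - √S * π / (2 * n)) ≤ T := by
    rw [hT, Finset.sum_mul]
    refine Finset.sum_le_sum fun k _ => mul_le_mul_of_nonneg_left ?_ (by positivity)
    refine le_trans ?_ (key k).2.1
    have := hle k
    gcongr
  clear_value S T
  have hTpos : 0 < T := lt_of_lt_of_le (by positivity) hT1
  have hr : 0 < √S := Real.sqrt_pos.2 hSpos
  have hrr : √S * √S = S := Real.mul_self_sqrt hSpos.le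
  have e : 1 / (π ^ 2 * S) + 1 / (-π ^ 2 * T) = -((S - T) / (π ^ 2 * S * T)) := by
    field_simp
    ring
  rw [e, abs_neg, abs_of_nonneg (div_nonneg (by linarith) (by positivity))]
  calc (S - T) / (π ^ 2 * S * T)
      ≤ (S * (√S * π / (2 * n))) / (π ^ 2 * S * (S * (4 / π ^ 2))) := by
        gcongr
        linarith
    _ = π / 8 / (√S * n) := by
        generalize √S = r at *
        subst hrr
        field_simp
        norm_num
end

section
/- Let d ≥ 1, n ≥ 2, and let (ρ_β)_{β ∈ I_n^d} be real numbers with 0 < ρ_β ≤ 1 for every β. Let A^ρ be the symmetric linear operator on ℝ^{I_n^d} whose eigenvectors are the orthonormal vectors (2/n)^{d/2} U_β, (U_β)_i = ∏_{k=1}^d sin(β_k π i_k/n), with eigenvalues λ_β / ρ_β, where λ_β = −π²(β_1² c_{β_1} + ⋯ + β_d² c_{β_d}) and c_l = sin²(lπ/2n)/(lπ/2n)². Let f : ℝ → ℝ be continuous and satisfy (s−t)(f(s)−f(t)) ≥ −L(s−t)² for all s,t ∈ ℝ, with 0 ≤ L < 4d. Then for every b ∈ ℝ^{I_n^d} there exists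 a unique u ∈ ℝ^{I_n^d} such that (A^ρ u)_i = f(u_i) + b_i for all i ∈ I_n^d. -/
open Real

/-- The interior grid index set `I_n^d = {1,…,n-1}^d`. -/
def GridIdx (d n : ℕ) : Type := {i : Fin d → ℕ // ∀ k, 1 ≤ i k ∧ i k ≤ n - 1}

theorem aux_cos_sum (n m : ℕ) (hm : 0 < m) (hmn : m < 2 * n) :
    ∑ j ∈ Finset.range n, Real.cos ((m : ℝ) * Real.pi * (j : ℝ) / (n : ℝ)) =
      (1 - (-1) ^ m) / 2 := by
  have hn : (0 : ℝ) < n := by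
    have : 0 < n := by omega
    exact_mod_cast this
  have hm' : (0 : ℝ) < m := by exact_mod_cast hm
  have hmn' : (m : ℝ) < 2 * n := by exact_mod_cast hmn
  set x : ℝ := (m : ℝ) * Real.pi / (2 * n) with hx
  have hs : 0 < Real.sin x := by
    apply Real.sin_pos_of_pos_of_lt_pi
    · positivity
    · rw [hx, div_lt_iff₀ (by positivity)]
      nlinarith [Real.pi_pos]
  have key : ∀ N : ℕ, 2 * Real.sin x * ∑ j ∈ Finset.range N,
      Real.cos ((m : ℝ) * Real.pi * (j : ℝ) / (n : ℝ)) =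
      Real.sin (2 * N * x - x) + Real.sin x := by
    intro N
    induction N with
    | zero => simp
    | succ k ih =>
      rw [Finset.sum_range_succ, mul_add, ih]
      have h1 : (m : ℝ) * Real.pi * (k : ℝ) / (n : ℝ) = 2 * k * x := by
        rw [hx]; field_simp
      have h2 : 2 * ((k + 1 : ℕ) : ℝ) * x - x = 2 * k * x + x := by push_cast; ring
      rw [h1, h2, Real.sin_sub, Real.sin_add]
      ring
  have h := key n
  have h3 : 2 * (n : ℝ) * x - x = m * Real.pi - x := by
    rw [hx]; field_simp
  have h4 : Real.sin (m * Real.pi - x) = -((-1) ^ m * Real.sin x) := by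
    rw [Real.sin_sub, Real.sin_nat_mul_pi, Real.cos_nat_mul_pi]; ring
  rw [h3, h4] at h
  have : 2 * Real.sin x * (∑ j ∈ Finset.range n,
      Real.cos ((m : ℝ) * Real.pi * (j : ℝ) / (n : ℝ)) - (1 - (-1) ^ m) / 2) = 0 := by
    rw [mul_sub, h]; ring
  rcases mul_eq_zero.1 this with h0 | h0
  · exfalso; linarith
  · linarith

theorem aux_sin_sum_lt (n a b : ℕ) (hb : 1 ≤ b) (hab : b < a) (ha : a ≤ n - 1) :
    ∑ j ∈ Finset.range n, Real.sin ((a : ℝ) * Real.pi * (j : ℝ) / (n : ℝ)) *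
      Real.sin ((b : ℝ) * Real.pi * (j : ℝ) / (n : ℝ)) = 0 := by
  obtain ⟨k, rfl⟩ := Nat.exists_eq_add_of_lt hab
  have h1 := aux_cos_sum n (k + 1) (by omega) (by omega)
  have h2 := aux_cos_sum n (2 * b + (k + 1)) (by omega) (by omega)
  have h3 : ((-1 : ℝ)) ^ (2 * b + (k + 1)) = (-1) ^ (k + 1) := by
    rw [pow_add, pow_mul]; simp
  rw [h3, ← h1] at h2
  have : ∀ j ∈ Finset.range n, Real.sin (((b + k + 1 : ℕ) : ℝ) * Real.pi * (j : ℝ) / (n : ℝ)) *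
      Real.sin ((b : ℝ) * Real.pi * (j : ℝ) / (n : ℝ)) =
      (Real.cos (((k + 1 : ℕ) : ℝ) * Real.pi * (j : ℝ) / (n : ℝ)) -
       Real.cos (((2 * b + (k + 1) : ℕ) : ℝ) * Real.pi * (j : ℝ) / (n : ℝ))) / 2 := by
    intro j _
    have e1 : ((k + 1 : ℕ) : ℝ) * Real.pi * (j : ℝ) / (n : ℝ) =
      ((b + k + 1 : ℕ) : ℝ) * Real.pi * (j : ℝ) / (n : ℝ) -
        (b : ℝ) * Real.pi * (j : ℝ) / (n : ℝ) := by push_cast; ring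
    have e2 : ((2 * b + (k + 1) : ℕ) : ℝ) * Real.pi * (j : ℝ) / (n : ℝ) =
      ((b + k + 1 : ℕ) : ℝ) * Real.pi * (j : ℝ) / (n : ℝ) +
        (b : ℝ) * Real.pi * (j : ℝ) / (n : ℝ) := by push_cast; ring
    rw [e1, e2, Real.cos_sub, Real.cos_add]; ring
  rw [Finset.sum_congr rfl this, ← Finset.sum_div, Finset.sum_sub_distrib, h2]
  simp

theorem aux_sin_sum_eq (n a : ℕ) (ha1 : 1 ≤ a) (ha : a ≤ n - 1) :
    ∑ j ∈ Finset.range n, Real.sin ((a : ℝ) * Real.pi * (j : ℝ) / (n : ℝ)) *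
      Real.sin ((a : ℝ) * Real.pi * (j : ℝ) / (n : ℝ)) = n / 2 := by
  have h1 := aux_cos_sum n (2 * a) (by omega) (by omega)
  have : ∀ j ∈ Finset.range n, Real.sin ((a : ℝ) * Real.pi * (j : ℝ) / (n : ℝ)) *
      Real.sin ((a : ℝ) * Real.pi * (j : ℝ) / (n : ℝ)) =
      (1 - Real.cos (((2 * a : ℕ) : ℝ) * Real.pi * (j : ℝ) / (n : ℝ))) / 2 := by
    intro j _
    have e2 : ((2 * a : ℕ) : ℝ) * Real.pi * (j : ℝ) / (n : ℝ) =
      2 * ((a : ℝ) * Real.pi * (j : ℝ) / (n : ℝ)) := by push_cast; ring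
    rw [e2, Real.cos_two_mul, Real.cos_sq']; ring
  rw [Finset.sum_congr rfl this, ← Finset.sum_div, Finset.sum_sub_distrib, h1]
  simp [pow_mul]

theorem aux_sin_orth (n a b : ℕ) (ha1 : 1 ≤ a) (ha : a ≤ n - 1) (hb1 : 1 ≤ b) (hb : b ≤ n - 1) :
    ∑ j : Finset.Icc 1 (n - 1), Real.sin ((a : ℝ) * Real.pi * ((j : ℕ) : ℝ) / (n : ℝ)) *
      Real.sin ((b : ℝ) * Real.pi * ((j : ℕ) : ℝ) / (n : ℝ)) = if a = b then (n : ℝ) / 2 else 0 := by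
  rw [Finset.sum_coe_sort (Finset.Icc 1 (n - 1)) (fun j : ℕ =>
    Real.sin ((a : ℝ) * Real.pi * (j : ℝ) / (n : ℝ)) *
      Real.sin ((b : ℝ) * Real.pi * (j : ℝ) / (n : ℝ)))]
  have hsub : ∑ j ∈ Finset.Icc 1 (n - 1), Real.sin ((a : ℝ) * Real.pi * (j : ℝ) / (n : ℝ)) *
      Real.sin ((b : ℝ) * Real.pi * (j : ℝ) / (n : ℝ)) =
      ∑ j ∈ Finset.range n, Real.sin ((a : ℝ) * Real.pi * (j : ℝ) / (n : ℝ)) *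
      Real.sin ((b : ℝ) * Real.pi * (j : ℝ) / (n : ℝ)) := by
    apply Finset.sum_subset
    · intro j hj
      simp only [Finset.mem_Icc, Finset.mem_range] at *
      omega
    · intro j hj hj'
      simp only [Finset.mem_Icc, Finset.mem_range] at *
      have : j = 0 := by omega
      subst this
      simp
  rw [hsub]
  split_ifs with h
  · subst h; exact aux_sin_sum_eq n a ha1 ha
  · rcases lt_or_gt_of_ne h with h | h
    · rw [← aux_sin_sum_lt n b a ha1 h hb]
      exact Finset.sum_congr rfl fun j _ => mul_comm _ _
    · exact aux_sin_sum_lt n a b hb1 h ha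

/-- The grid as a function type. -/
def auxEquiv (d n : ℕ) : (Fin d → Finset.Icc 1 (n - 1)) ≃ GridIdx d n where
  toFun g := ⟨fun k => (g k : ℕ), fun k => Finset.mem_Icc.1 (g k).2⟩
  invFun i := fun k => ⟨i.1 k, Finset.mem_Icc.2 (i.2 k)⟩
  left_inv _ := rfl
  right_inv _ := rfl

theorem aux_orth (d n : ℕ) (hn : 2 ≤ n) [Fintype (GridIdx d n)] [DecidableEq (GridIdx d n)]
    (e : GridIdx d n → GridIdx d n → ℝ)
    (he : ∀ β i, e β i =
      (2 / (n : ℝ)) ^ ((d : ℝ) / 2) *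
        ∏ k, Real.sin ((β.1 k : ℝ) * Real.pi * (i.1 k : ℝ) / (n : ℝ)))
    (β γ : GridIdx d n) : ∑ i, e β i * e γ i = if β = γ then 1 else 0 := by
  have hn0 : (0 : ℝ) < n := by
    have : 0 < n := by omega
    exact_mod_cast this
  have hC : (2 / (n : ℝ)) ^ ((d : ℝ) / 2) * (2 / (n : ℝ)) ^ ((d : ℝ) / 2) = (2 / (n : ℝ)) ^ d := by
    rw [← Real.rpow_add (by positivity), add_halves, Real.rpow_natCast]
  rw [← Equiv.sum_comp (auxEquiv d n)]
  have h1 : ∀ g : Fin d → Finset.Icc 1 (n - 1),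
      e β (auxEquiv d n g) * e γ (auxEquiv d n g) = (2 / (n : ℝ)) ^ d *
      ∏ k, (Real.sin ((β.1 k : ℝ) * Real.pi * ((g k : ℕ) : ℝ) / (n : ℝ)) *
        Real.sin ((γ.1 k : ℝ) * Real.pi * ((g k : ℕ) : ℝ) / (n : ℝ))) := by
    intro g
    rw [he, he, ← hC, Finset.prod_mul_distrib]
    have hg : ∀ k, (auxEquiv d n g).1 k = (g k : ℕ) := fun _ => rfl
    simp only [hg]
    ring
  rw [Finset.sum_congr rfl (fun g _ => h1 g), ← Finset.mul_sum]
  have h2 := Fintype.prod_sum (fun (k : Fin d) (j : Finset.Icc 1 (n - 1)) =>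
    Real.sin ((β.1 k : ℝ) * Real.pi * ((j : ℕ) : ℝ) / (n : ℝ)) *
        Real.sin ((γ.1 k : ℝ) * Real.pi * ((j : ℕ) : ℝ) / (n : ℝ)))
  rw [← h2, Finset.prod_congr rfl (fun k _ => aux_sin_orth n (β.1 k) (γ.1 k) (β.2 k).1 (β.2 k).2
    (γ.2 k).1 (γ.2 k).2)]
  split_ifs with h
  · subst h
    simp only [if_true, Finset.prod_const, Finset.card_univ, Fintype.card_fin]
    rw [← mul_pow]
    have : 2 / (n : ℝ) * (n / 2) = 1 := by field_simp
    rw [this, one_pow]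
  · have : ∃ k, β.1 k ≠ γ.1 k := by
      by_contra hcon
      push Not at hcon
      exact h (Subtype.ext (funext hcon))
    obtain ⟨k, hk⟩ := this
    rw [Finset.prod_eq_zero (Finset.mem_univ k) (by simp [hk]), mul_zero]

theorem aux_lam (d n : ℕ) (hn : 2 ≤ n)
    (ρ : GridIdx d n → ℝ) (hρ : ∀ β, 0 < ρ β ∧ ρ β ≤ 1)
    (c : ℕ → ℝ)
    (hc : ∀ l : ℕ, c l =
      Real.sin ((l : ℝ) * Real.pi / (2 * (n : ℝ))) ^ 2 / ((l : ℝ) * Real.pi / (2 * (n : ℝ))) ^ 2)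
    (lam : GridIdx d n → ℝ)
    (hlam : ∀ β, lam β = -Real.pi ^ 2 * ∑ k, (β.1 k : ℝ) ^ 2 * c (β.1 k))
    (β : GridIdx d n) : 4 * (d : ℝ) ≤ -(lam β / ρ β) := by
  have hn0 : (0 : ℝ) < n := by
    have : 0 < n := by omega
    exact_mod_cast this
  have hpi := Real.pi_pos
  have hterm : ∀ k, (4 : ℝ) ≤ Real.pi ^ 2 * ((β.1 k : ℝ) ^ 2 * c (β.1 k)) := by
    intro k
    obtain ⟨h1, h2⟩ := β.2 k
    have h1' : (1 : ℝ) ≤ (β.1 k : ℝ) := by exact_mod_cast h1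
    have h2' : (β.1 k : ℝ) ≤ n := by
      have : β.1 k ≤ n := by omega
      exact_mod_cast this
    rw [hc]
    set l : ℝ := (β.1 k : ℝ)
    have hx0 : 0 < l * Real.pi / (2 * n) := by positivity
    have hx1 : l * Real.pi / (2 * n) ≤ Real.pi / 2 := by
      rw [div_le_div_iff₀ (by positivity) (by positivity)]
      nlinarith
    have hs := Real.mul_le_sin hx0.le hx1
    have hsq : (2 / Real.pi) ^ 2 ≤ Real.sin (l * Real.pi / (2 * n)) ^ 2 /
        (l * Real.pi / (2 * n)) ^ 2 := by
      rw [← div_pow]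
      apply pow_le_pow_left₀ (by positivity)
      rwa [le_div_iff₀ hx0]
    calc (4 : ℝ) ≤ Real.pi ^ 2 * (l ^ 2 * (2 / Real.pi) ^ 2) := by
          have : Real.pi ^ 2 * (l ^ 2 * (2 / Real.pi) ^ 2) = 4 * l ^ 2 := by
            field_simp; norm_num
          rw [this]; nlinarith
      _ ≤ _ := by gcongr
  have h4 : 4 * (d : ℝ) ≤ -lam β := by
    rw [hlam, neg_mul, neg_neg, Finset.mul_sum]
    calc 4 * (d : ℝ) = ∑ _k : Fin d, (4 : ℝ) := by simp [mul_comm]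
      _ ≤ _ := Finset.sum_le_sum fun k _ => hterm k
  rw [← neg_div, le_div_iff₀ (hρ β).1]
  have hd0 : (0 : ℝ) ≤ d := Nat.cast_nonneg d
  nlinarith [(hρ β).1, (hρ β).2]

theorem aux_prim (f : ℝ → ℝ) (hfc : Continuous f) (L : ℝ)
    (hmono : ∀ s t : ℝ, (s - t) * (f s - f t) ≥ -L * (s - t) ^ 2) (x : ℝ) :
    f 0 * x - L / 2 * x ^ 2 ≤ ∫ t in (0:ℝ)..x, f t := by
  have hd : ∀ y, HasDerivAt (fun x => (∫ t in (0:ℝ)..x, f t) - (f 0 * x - L / 2 * x ^ 2))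
      (f y - (f 0 - L * y)) y := by
    intro y
    have h1 : HasDerivAt (fun x => ∫ t in (0:ℝ)..x, f t) (f y) y :=
      hfc.integral_hasStrictDerivAt 0 y |>.hasDerivAt
    have h2 : HasDerivAt (fun x : ℝ => f 0 * x - L / 2 * x ^ 2) (f 0 - L * y) y := by
      have := ((hasDerivAt_id y).const_mul (f 0)).sub (((hasDerivAt_id y).pow 2).const_mul (L / 2))
      refine this.congr_deriv ?_
      simp; ring
    exact h1.sub h2
  have hcont : Continuous (fun x => (∫ t in (0:ℝ)..x, f t) - (f 0 * x - L / 2 * x ^ 2)) :=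
    continuous_iff_continuousAt.2 fun y => (hd y).continuousAt
  have h0 : (∫ t in (0:ℝ)..0, f t) - (f 0 * 0 - L / 2 * 0 ^ 2) = 0 := by simp
  suffices h : (∫ t in (0:ℝ)..0, f t) - (f 0 * 0 - L / 2 * 0 ^ 2) ≤
      (∫ t in (0:ℝ)..x, f t) - (f 0 * x - L / 2 * x ^ 2) by linarith
  rcases le_total 0 x with hx | hx
  · have : MonotoneOn (fun x => (∫ t in (0:ℝ)..x, f t) - (f 0 * x - L / 2 * x ^ 2)) (Set.Ici 0) := by
      apply monotoneOn_of_deriv_nonneg (convex_Ici 0) hcont.continuousOn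
      · exact fun y _ => (hd y).differentiableAt.differentiableWithinAt
      · intro y hy
        rw [interior_Ici, Set.mem_Ioi] at hy
        rw [(hd y).deriv]
        have := hmono y 0
        by_contra hcon
        push Not at hcon
        nlinarith
    exact this (Set.mem_Ici.2 le_rfl) (Set.mem_Ici.2 hx) hx
  · have : AntitoneOn (fun x => (∫ t in (0:ℝ)..x, f t) - (f 0 * x - L / 2 * x ^ 2)) (Set.Iic 0) := by
      apply antitoneOn_of_deriv_nonpos (convex_Iic 0) hcont.continuousOn
      · exact fun y _ => (hd y).differentiableAt.differentiableWithinAt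
      · intro y hy
        rw [interior_Iic, Set.mem_Iio] at hy
        rw [(hd y).deriv]
        have := hmono y 0
        by_contra hcon
        push Not at hcon
        nlinarith
    exact this (Set.mem_Iic.2 hx) (Set.mem_Iic.2 le_rfl) hx

/-- Abstract existence and uniqueness for a diagonalised operator. -/
theorem aux_main {ι : Type} [Fintype ι] [DecidableEq ι] (e : ι → ι → ℝ)
    (horth : ∀ β γ, ∑ i, e β i * e γ i = if β = γ then 1 else 0)
    (mu : ι → ℝ) (m : ℝ) (hmu : ∀ β, m ≤ -mu β)
    (A : (ι → ℝ) →ₗ[ℝ] (ι → ℝ)) (hA : ∀ β, A (e β) = mu β • e β)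
    (f : ℝ → ℝ) (hfc : Continuous f) (L : ℝ) (hL : L < m)
    (hmono : ∀ s t : ℝ, (s - t) * (f s - f t) ≥ -L * (s - t) ^ 2)
    (b : ι → ℝ) :
    ∃! u : ι → ℝ, ∀ i, A u i = f (u i) + b i := by
  -- completeness
  have hE : (Matrix.of e) * (Matrix.of e).transpose = 1 := by
    ext β γ
    simp [Matrix.mul_apply, horth, Matrix.one_apply]
  have hE' : (Matrix.of e).transpose * (Matrix.of e) = 1 := mul_eq_one_comm.1 hE
  have hcompl : ∀ i j, ∑ β, e β i * e β j = if i = j then 1 else 0 := by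
    intro i j
    have := congrFun (congrFun hE' i) j
    simpa [Matrix.mul_apply, Matrix.one_apply] using this
  have hexp : ∀ u : ι → ℝ, u = ∑ β, (∑ j, e β j * u j) • e β := by
    intro u
    funext i
    simp only [Finset.sum_apply, Pi.smul_apply, smul_eq_mul, Finset.sum_mul]
    rw [Finset.sum_comm]
    have : ∀ j, ∑ β, e β j * u j * e β i = (if j = i then 1 else 0) * u j := by
      intro j
      rw [← hcompl, Finset.sum_mul]
      exact Finset.sum_congr rfl fun β _ => by ring
    simp [this]
  have hAu : ∀ u i, A u i = ∑ β, mu β * (∑ j, e β j * u j) * e β i := by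
    intro u i
    conv_lhs => rw [hexp u]
    simp only [map_sum, map_smul, hA, Finset.sum_apply, Pi.smul_apply, smul_eq_mul]
    exact Finset.sum_congr rfl fun β _ => by ring
  have hpars : ∀ u : ι → ℝ, ∑ i, u i ^ 2 = ∑ β, (∑ j, e β j * u j) ^ 2 := by
    intro u
    have : ∀ i, u i ^ 2 = ∑ β, (∑ j, e β j * u j) * (e β i * u i) := by
      intro i
      have := congrFun (hexp u) i
      simp only [Finset.sum_apply, Pi.smul_apply, smul_eq_mul] at this
      calc u i ^ 2 = (∑ β, (∑ j, e β j * u j) * e β i) * u i := by rw [← this]; ring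
        _ = _ := by rw [Finset.sum_mul]; exact Finset.sum_congr rfl fun β _ => by ring
    rw [Finset.sum_congr rfl fun i _ => this i, Finset.sum_comm]
    exact Finset.sum_congr rfl fun β _ => by rw [← Finset.mul_sum]; ring
  have hquad : ∀ u : ι → ℝ, ∑ i, A u i * u i = ∑ β, mu β * (∑ j, e β j * u j) ^ 2 := by
    intro u
    simp only [hAu, Finset.sum_mul]
    rw [Finset.sum_comm]
    refine Finset.sum_congr rfl fun β _ => ?_
    have : ∀ i, mu β * (∑ j, e β j * u j) * e β i * u i =
      mu β * (∑ j, e β j * u j) * (e β i * u i) := fun i => by ring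
    simp only [this, ← Finset.mul_sum]
    ring
  have hcoer : ∀ u : ι → ℝ, m * ∑ i, u i ^ 2 ≤ ∑ β, -mu β * (∑ j, e β j * u j) ^ 2 := by
    intro u
    rw [hpars, Finset.mul_sum]
    exact Finset.sum_le_sum fun β _ => mul_le_mul_of_nonneg_right (hmu β) (sq_nonneg _)
  -- functional
  let F : ℝ → ℝ := fun x => ∫ t in (0:ℝ)..x, f t
  have hF : ∀ y, HasDerivAt F (f y) y := fun y => (hfc.integral_hasStrictDerivAt 0 y).hasDerivAt
  have hFc : Continuous F := continuous_iff_continuousAt.2 fun y => (hF y).continuousAt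
  let J : (ι → ℝ) → ℝ := fun u =>
    ∑ β, -mu β / 2 * (∑ j, e β j * u j) ^ 2 + ∑ i, (F (u i) + b i * u i)
  have hJc : Continuous J := by fun_prop
  set κ : ℝ := (m - L) / 2 with hκ
  have hκ0 : 0 < κ := by rw [hκ]; linarith
  set K : ℝ := ∑ i, (f 0 + b i) ^ 2 / (2 * κ) with hK
  have hlow : ∀ u : ι → ℝ, κ / 2 * ∑ i, u i ^ 2 - K ≤ J u := by
    intro u
    have h1 : m / 2 * ∑ i, u i ^ 2 ≤ ∑ β, -mu β / 2 * (∑ j, e β j * u j) ^ 2 := by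
      have := hcoer u
      have h' : ∑ β, -mu β / 2 * (∑ j, e β j * u j) ^ 2 =
          (∑ β, -mu β * (∑ j, e β j * u j) ^ 2) / 2 := by
        rw [Finset.sum_div]; exact Finset.sum_congr rfl fun β _ => by ring
      rw [h']; linarith
    have h2 : ∑ i, ((κ / 2 - m / 2) * u i ^ 2 - (f 0 + b i) ^ 2 / (2 * κ)) ≤
        ∑ i, (F (u i) + b i * u i) := by
      refine Finset.sum_le_sum fun i _ => ?_
      have hp : f 0 * u i - L / 2 * u i ^ 2 ≤ F (u i) := aux_prim f hfc L hmono (u i)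
      have hsq : 0 ≤ κ / 2 * (u i + (f 0 + b i) / κ) ^ 2 := by positivity
      have hsq' : κ / 2 * (u i + (f 0 + b i) / κ) ^ 2 =
          κ / 2 * u i ^ 2 + (f 0 + b i) * u i + (f 0 + b i) ^ 2 / (2 * κ) := by
        field_simp; ring
      have hm : m / 2 = κ + L / 2 := by rw [hκ]; ring
      rw [hm]
      nlinarith
    rw [Finset.sum_sub_distrib, ← Finset.mul_sum, ← hK] at h2
    show _ ≤ _ + _
    linarith
  have hlim : Filter.Tendsto J (Filter.cocompact (ι → ℝ)) Filter.atTop := by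
    have hnorm : ∀ u : ι → ℝ, ‖u‖ ^ 2 ≤ ∑ i, u i ^ 2 := by
      intro u
      have hs0 : 0 ≤ ∑ i, u i ^ 2 := Finset.sum_nonneg fun i _ => sq_nonneg _
      have : ‖u‖ ≤ Real.sqrt (∑ i, u i ^ 2) := by
        rw [pi_norm_le_iff_of_nonneg (Real.sqrt_nonneg _)]
        intro i
        rw [Real.norm_eq_abs]
        apply Real.abs_le_sqrt
        exact Finset.single_le_sum (f := fun i => u i ^ 2) (fun i _ => sq_nonneg _)
          (Finset.mem_univ i)
      calc ‖u‖ ^ 2 ≤ Real.sqrt (∑ i, u i ^ 2) ^ 2 := by gcongr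
        _ = _ := Real.sq_sqrt hs0
    have ht : Filter.Tendsto (fun u : ι → ℝ => κ / 2 * ‖u‖ ^ 2 - K)
        (Filter.cocompact (ι → ℝ)) Filter.atTop := by
      apply Filter.tendsto_atTop_add_const_right
      apply Filter.Tendsto.const_mul_atTop (by positivity)
      exact (Filter.tendsto_pow_atTop (by norm_num)).comp (tendsto_norm_cocompact_atTop)
    refine Filter.tendsto_atTop_mono (fun u => ?_) ht
    have := mul_le_mul_of_nonneg_left (hnorm u) (by positivity : 0 ≤ κ / 2)
    linarith [hlow u]
  obtain ⟨u, hu⟩ := hJc.exists_forall_le hlim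
  have hsol : ∀ i, A u i = f (u i) + b i := by
    intro i
    have hder : HasDerivAt (fun t : ℝ => J (Function.update u i t))
        (-(A u i) + (f (u i) + b i)) (u i) := by
      have hup : ∀ j, HasDerivAt (fun t : ℝ => Function.update u i t j)
          (if j = i then 1 else 0) (u i) := by
        intro j
        by_cases h : j = i
        · subst h; simpa using hasDerivAt_id' (u j)
        · simpa [h] using hasDerivAt_const (u i) (u j)
      have hq : HasDerivAt (fun t : ℝ =>
          ∑ β, -mu β / 2 * (∑ j, e β j * Function.update u i t j) ^ 2) (-(A u i)) (u i) := by
        have h1 : ∀ β, HasDerivAt (fun t : ℝ => ∑ j, e β j * Function.update u i t j)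
            (e β i) (u i) := by
          intro β
          have := HasDerivAt.fun_sum (u := Finset.univ)
            (fun j _ => (hup j).const_mul (e β j))
          simpa using this
        have h2 := HasDerivAt.fun_sum (u := Finset.univ)
            (fun β _ => ((h1 β).fun_pow 2).const_mul (-mu β / 2))
        refine h2.congr_deriv ?_
        rw [hAu, ← Finset.sum_neg_distrib]
        refine Finset.sum_congr rfl fun β _ => ?_
        simp only [Function.update_eq_self]
        push_cast
        ring
      have hr : HasDerivAt (fun t : ℝ => ∑ j, (F (Function.update u i t j) +
          b j * Function.update u i t j)) (f (u i) + b i) (u i) := by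
        have h1 : ∀ j, HasDerivAt (fun t : ℝ => F (Function.update u i t j) +
          b j * Function.update u i t j) (f (u j) * (if j = i then 1 else 0) +
            b j * (if j = i then 1 else 0)) (u i) := by
          intro j
          refine HasDerivAt.add ?_ ((hup j).const_mul (b j))
          refine HasDerivAt.comp (h₂ := F) (u i) ?_ (hup j)
          rw [Function.update_eq_self]
          exact hF (u j)
        have h2 := HasDerivAt.fun_sum (u := Finset.univ) (fun j _ => h1 j)
        refine h2.congr_deriv ?_
        simp [Finset.sum_add_distrib]
      exact hq.add hr
    have hmin : IsLocalMin (fun t : ℝ => J (Function.update u i t)) (u i) := by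
      refine Filter.Eventually.of_forall fun t => ?_
      simp only [Function.update_eq_self]
      exact hu _
    have := hmin.hasDerivAt_eq_zero hder
    linarith
  refine ⟨u, hsol, ?_⟩
  · intro v hv
    have h1 := hquad (v - u)
    have h2 := hcoer (v - u)
    simp only [neg_mul, Finset.sum_neg_distrib] at h2
    rw [← h1] at h2
    have h3 : -L * ∑ i, (v - u) i ^ 2 ≤ ∑ i, A (v - u) i * (v - u) i := by
      rw [Finset.mul_sum]
      refine Finset.sum_le_sum fun i _ => ?_
      have := hmono (v i) (u i)
      rw [map_sub, Pi.sub_apply, Pi.sub_apply, hv, hsol]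
      linarith
    have h0 : 0 ≤ ∑ i, (v - u) i ^ 2 := Finset.sum_nonneg fun i _ => sq_nonneg _
    have hz : ∑ i, (v - u) i ^ 2 = 0 := by nlinarith
    funext i
    have := (Finset.sum_eq_zero_iff_of_nonneg (fun i _ => sq_nonneg ((v - u) i))).1 hz i
      (Finset.mem_univ i)
    have := pow_eq_zero_iff (two_ne_zero) |>.1 this
    rw [Pi.sub_apply] at this
    linarith

/-- Proposition 3.9: the lattice scheme `A^ρ u = f(u) + b` has a unique solution, where `A^ρ`
is the symmetric linear operator on `ℝ^{I_n^d}` whose eigenvectors are the orthonormal discrete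
sine vectors `(2/n)^{d/2} U_β` with eigenvalues `λ_β / ρ_β`, `0 < ρ_β ≤ 1`, and `f` is
continuous with `(s-t)(f(s)-f(t)) ≥ -L(s-t)²`, `0 ≤ L < 4d`. -/
theorem stmt17 (d n : ℕ) (hd : 1 ≤ d) (hn : 2 ≤ n)
    (ρ : GridIdx d n → ℝ) (hρ : ∀ β, 0 < ρ β ∧ ρ β ≤ 1)
    (c : ℕ → ℝ)
    (hc : ∀ l : ℕ, c l =
      Real.sin ((l : ℝ) * Real.pi / (2 * (n : ℝ))) ^ 2 / ((l : ℝ) * Real.pi / (2 * (n : ℝ))) ^ 2)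
    (lam : GridIdx d n → ℝ)
    (hlam : ∀ β, lam β = -Real.pi ^ 2 * ∑ k, (β.1 k : ℝ) ^ 2 * c (β.1 k))
    (e : GridIdx d n → GridIdx d n → ℝ)
    (he : ∀ β i, e β i =
      (2 / (n : ℝ)) ^ ((d : ℝ) / 2) *
        ∏ k, Real.sin ((β.1 k : ℝ) * Real.pi * (i.1 k : ℝ) / (n : ℝ)))
    (Aρ : (GridIdx d n → ℝ) →ₗ[ℝ] (GridIdx d n → ℝ))
    (hA : ∀ β, Aρ (e β) = (lam β / ρ β) • e β)
    (f : ℝ → ℝ) (hfc : Continuous f) (L : ℝ) (hL0 : 0 ≤ L) (hL : L < 4 * d)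
    (hmono : ∀ s t : ℝ, (s - t) * (f s - f t) ≥ -L * (s - t) ^ 2)
    (b : GridIdx d n → ℝ) :
    ∃! u : GridIdx d n → ℝ, ∀ i, Aρ u i = f (u i) + b i := by
  classical
  letI : Fintype (GridIdx d n) := Fintype.ofEquiv _ (auxEquiv d n)
  exact aux_main e (aux_orth d n hn e he) (fun β => lam β / ρ β) (4 * d)
    (aux_lam d n hn ρ hρ c hc lam hlam) Aρ hA f hfc L hL hmono b
end
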